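/- Suppose all agents share susceptibility α ∈ (0,1), set α̃ = α/(1−α) and B = α̃(L + α̃I)^{-1}, and define the total cost C(z) = (1−α) z^T L z + α‖z − s‖₂². Then the truthful equilibrium z = Bs satisfies C(z) = (1−α) s^T Q s, where Q = B L B + α̃ (I − B)², and Q is symmetric positive semidefinite. -/

import Mathlib

/-!
Since `W` is symmetric, so are `L` and `B`, hence `Q = Bᵀ L B + α̃ (1 - B)ᵀ (1 - B)`. The cost
identity is then the expansion of the two quadratic forms at `z = Bs`, with `α = (1 - α) α̃`, and
`Q` is positive semidefinite because `L` is (`posSemidef_Lap`), by the identity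
`2 xᵀ L x = ∑ i j, w i j (x i - x j)²`.
-/

open Matrix

/-- The graph Laplacian `L = D - W`. -/
noncomputable def Lap {n : ℕ} (W : Matrix (Fin n) (Fin n) ℝ) : Matrix (Fin n) (Fin n) ℝ :=
  Matrix.diagonal (fun i => ∑ j, W i j) - W

theorem isSymm_Lap {n : ℕ} {W : Matrix (Fin n) (Fin n) ℝ} (hW : W.IsSymm) : (Lap W).IsSymm := by
  unfold Lap
  exact (Matrix.isSymm_diagonal _).sub hW

theorem two_mul_dotProduct_Lap {n : ℕ} {W : Matrix (Fin n) (Fin n) ℝ} (hW : W.IsSymm)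
    (x : Fin n → ℝ) :
    2 * (x ⬝ᵥ (Lap W) *ᵥ x) = ∑ i, ∑ j, W i j * (x i - x j) ^ 2 := by
  have h1 : x ⬝ᵥ (Lap W) *ᵥ x = ∑ i, ∑ j, (W i j * x i ^ 2 - W i j * (x i * x j)) := by
    simp only [Lap, Matrix.sub_mulVec, dotProduct, Pi.sub_apply, Matrix.mulVec_diagonal]
    refine Finset.sum_congr rfl fun i _ => ?_
    simp only [Matrix.mulVec, dotProduct, mul_sub, Finset.sum_sub_distrib, Finset.mul_sum,
      Finset.sum_mul]
    congr 1 <;> exact Finset.sum_congr rfl fun j _ => by ring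
  have h2 : x ⬝ᵥ (Lap W) *ᵥ x = ∑ i, ∑ j, (W i j * x j ^ 2 - W i j * (x i * x j)) := by
    rw [h1, Finset.sum_comm]
    refine Finset.sum_congr rfl fun i _ => Finset.sum_congr rfl fun j _ => ?_
    rw [hW.apply i j]
    ring
  rw [two_mul]
  nth_rewrite 1 [h1]
  rw [h2]
  simp only [← Finset.sum_add_distrib]
  exact Finset.sum_congr rfl fun i _ => Finset.sum_congr rfl fun j _ => by ring

theorem posSemidef_Lap {n : ℕ} {W : Matrix (Fin n) (Fin n) ℝ} (hW : W.IsSymm)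
    (hnn : ∀ i j, 0 ≤ W i j) : (Lap W).PosSemidef := by
  refine Matrix.PosSemidef.of_dotProduct_mulVec_nonneg ?_ fun x => ?_
  · rw [Matrix.IsHermitian, Matrix.conjTranspose_eq_transpose_of_trivial]
    exact isSymm_Lap hW
  · have h := two_mul_dotProduct_Lap hW x
    have h' : 0 ≤ ∑ i, ∑ j, W i j * (x i - x j) ^ 2 :=
      Finset.sum_nonneg fun i _ => Finset.sum_nonneg fun j _ => mul_nonneg (hnn i j) (sq_nonneg _)
    rw [star_trivial]
    linarith

/-- With shared susceptibility `α`, `α̃ = α/(1−α)`, `B = α̃ (L + α̃ I)⁻¹`, and total cost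
`C(z) = (1−α) zᵀ L z + α ‖z − s‖₂²`, the truthful equilibrium `z = Bs` satisfies
`C(z) = (1−α) sᵀ Q s` where `Q = B L B + α̃ (I − B)²`, and `Q` is symmetric positive
semidefinite. -/
theorem stmt8 (n : ℕ) (W : Matrix (Fin (n + 1)) (Fin (n + 1)) ℝ)
    (hWsymm : W.IsSymm) (hWnonneg : ∀ i j, 0 ≤ W i j) (hWdiag : ∀ i, W i i = 0)
    (a : ℝ) (ha : a ∈ Set.Ioo (0 : ℝ) 1) (atil : ℝ) (hatil : atil = a / (1 - a))
    (B : Matrix (Fin (n + 1)) (Fin (n + 1)) ℝ)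
    (hB : B = atil • (Lap W + atil • (1 : Matrix (Fin (n + 1)) (Fin (n + 1)) ℝ))⁻¹)
    (s : Fin (n + 1) → ℝ)
    (C : (Fin (n + 1) → ℝ) → ℝ)
    (hC : C = fun z => (1 - a) * (z ⬝ᵥ (Lap W).mulVec z) + a * ∑ i, (z i - s i) ^ 2)
    (Q : Matrix (Fin (n + 1)) (Fin (n + 1)) ℝ)
    (hQ : Q = B * Lap W * B + atil • ((1 - B) * (1 - B))) :
    C (B.mulVec s) = (1 - a) * (s ⬝ᵥ Q.mulVec s) ∧ Q.PosSemidef := by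
  obtain ⟨ha0, ha1⟩ := ha
  have h1a : 0 < 1 - a := by linarith
  have hat : 0 ≤ atil := by rw [hatil]; positivity
  have haa : a = (1 - a) * atil := by rw [hatil]; field_simp
  have hL := isSymm_Lap hWsymm
  have hBs : Bᵀ = B := by
    rw [hB, Matrix.transpose_smul, Matrix.transpose_nonsing_inv, Matrix.transpose_add, hL.eq,
      Matrix.transpose_smul, Matrix.transpose_one]
  have hQ' : Q = Bᵀ * Lap W * B + atil • ((1 - B)ᵀ * (1 - B)) := by
    rw [hQ, Matrix.transpose_sub, Matrix.transpose_one, hBs]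
  constructor
  · have hsum : ∑ i, ((B *ᵥ s) i - s i) ^ 2 = ((1 - B) *ᵥ s) ⬝ᵥ ((1 - B) *ᵥ s) := by
      rw [Matrix.sub_mulVec, Matrix.one_mulVec]
      simp only [dotProduct, Pi.sub_apply]
      exact Finset.sum_congr rfl fun i _ => by ring
    have hq : s ⬝ᵥ Q *ᵥ s = (B *ᵥ s) ⬝ᵥ (Lap W) *ᵥ (B *ᵥ s)
        + atil * (((1 - B) *ᵥ s) ⬝ᵥ ((1 - B) *ᵥ s)) := by
      rw [hQ', Matrix.add_mulVec, dotProduct_add, Matrix.smul_mulVec, dotProduct_smul,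
        smul_eq_mul, ← Matrix.mulVec_mulVec, ← Matrix.mulVec_mulVec, ← Matrix.mulVec_mulVec,
        Matrix.dotProduct_mulVec s Bᵀ, Matrix.dotProduct_mulVec s (1 - B)ᵀ,
        Matrix.vecMul_transpose, Matrix.vecMul_transpose]
    simp only [hC]
    rw [hsum, hq, mul_add, ← mul_assoc (1 - a) atil, ← haa]
  · rw [hQ', ← Matrix.conjTranspose_eq_transpose_of_trivial,
      ← Matrix.conjTranspose_eq_transpose_of_trivial]
    exact ((posSemidef_Lap hWsymm hWnonneg).conjTranspose_mul_mul_same B).add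
      ((Matrix.posSemidef_conjTranspose_mul_self (1 - B)).smul hat)
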